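/- arXiv:2307.01562 — 4 statements merged into one kernel-verified Lean document; each statement's English description precedes it below -/
import Mathlib

section
/- Let T be a measure-preserving automorphism of a probability space (X, μ), let (k_j) be a strictly increasing sequence of natural numbers such that the Koopman powers U_T^{k_j} converge weakly to a bounded operator V on L²(μ). Let S be a mixing measure-preserving automorphism of a probability space (Y, ν) and let η be a joining of (X, μ, T) and (Y, ν, S). Then for all f ∈ L²(μ) and g ∈ L²(ν) one has ∫_{X×Y} (V f)(x) g(y) dη(x,y) = (∫_X f dμ)(∫_Y g dν). -/
open MeasureTheory Filter Topology

/-- A measure-preserving transformation `S` of `(Y, ν)` is mixing if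
`ν (A ∩ S^{-n} B) → ν A * ν B` for all measurable sets `A`, `B`. -/
def MeasureMixing {Y : Type*} [MeasurableSpace Y] (S : Y → Y) (ν : Measure Y) : Prop :=
  ∀ A B : Set Y, MeasurableSet A → MeasurableSet B →
    Tendsto (fun n => ν (A ∩ S^[n] ⁻¹' B)) atTop (𝓝 (ν A * ν B))

/-!
Let `U` be a linear isometry of a Hilbert space. If `⟪v, Uⁿ v⟫ → 0`, then `⟪v, Uⁿ u⟫ → 0` for
*every* vector `u`: otherwise there are times `n₁ < ⋯ < n_J` with `|⟪v, U^{nᵢ} u⟫| ≥ ε` and with the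
vectors `U^{n_J - nᵢ} v` almost orthogonal, so some sum of these with unimodular coefficients has
norm `O(√J)` although its inner product with `U^{n_J} u` is at least `J ε`.

Applied to the Koopman operator of the joining and to the centred indicator of `{(x, y) | y ∈ B}`,
this turns mixing of `S` into `∫ F(Tⁿ x, Sⁿ y) g(y) dη → ∫ F dη ∫ g dν` for all `F ∈ L²(η)`,
`g ∈ L²(ν)`. For `F(x, y) = f(x)` and `n = k_j`, the left side also tends to `∫ (V f)(x) g(y) dη`.
-/

open Function
open scoped InnerProductSpace

section LinearIsometry

variable {𝕜 E : Type*} [RCLike 𝕜] [NormedAddCommGroup E] [InnerProductSpace 𝕜 E]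
  (U : E →ₗᵢ[𝕜] E) {v : E}

-- Here `y` is a sum of `J` unimodular multiples of vectors `U ^ m v`.
theorem exists_norm_sq_le_and_le_re_inner_pow {u : E}
    (hv : Tendsto (fun n ↦ ⟪v, (U ^ n) v⟫_𝕜) atTop (𝓝 0)) {ε : ℝ}
    (hu : ∃ᶠ n in atTop, ε ≤ ‖⟪v, (U ^ n) u⟫_𝕜‖) (J : ℕ) :
    ∃ (y : E) (N : ℕ), Tendsto (fun n ↦ ⟪v, (U ^ n) y⟫_𝕜) atTop (𝓝 0) ∧
      ‖y‖ ^ 2 ≤ J * (‖v‖ ^ 2 + 1) ∧ J * ε ≤ RCLike.re ⟪y, (U ^ N) u⟫_𝕜 := by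
  induction J with
  | zero => exact ⟨0, 0, by simp⟩
  | succ J ih =>
    obtain ⟨y, N, hvy, hy, hyu⟩ := ih
    have hsmall : ∀ᶠ n in atTop, ‖⟪v, (U ^ (n - N)) y⟫_𝕜‖ < 1 / 2 :=
      (hvy.comp (tendsto_sub_atTop_nat N)).norm.eventually_lt_const (by simp)
    obtain ⟨n, hn, hnN, hvn⟩ := (hu.and_eventually ((eventually_ge_atTop N).and hsmall)).exists
    obtain ⟨m, rfl⟩ := Nat.exists_eq_add_of_le' hnN
    rw [Nat.add_sub_cancel] at hvn
    obtain ⟨c, hc, hcv⟩ := RCLike.exists_norm_eq_mul_self ⟪v, (U ^ (m + N)) u⟫_𝕜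
    let w := (starRingEnd 𝕜) c • v
    have hw : ‖w‖ = ‖v‖ := by simp [w, norm_smul, hc]
    have hcross : RCLike.re ⟪(U ^ m) y, w⟫_𝕜 < 1 / 2 := calc
      RCLike.re ⟪(U ^ m) y, w⟫_𝕜 ≤ ‖⟪(U ^ m) y, w⟫_𝕜‖ := RCLike.re_le_norm _
      _ = ‖⟪v, (U ^ m) y⟫_𝕜‖ := by simp [w, inner_smul_right, hc, norm_inner_symm]
      _ < 1 / 2 := hvn
    refine ⟨(U ^ m) y + w, m + N, ?_, ?_, ?_⟩
    · have hlim := ((tendsto_add_atTop_iff_nat m).2 hvy).add (hv.const_mul ((starRingEnd 𝕜) c))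
      simpa [w, inner_add_right, inner_smul_right, pow_add] using hlim
    · rw [norm_add_sq (𝕜 := 𝕜), LinearIsometry.norm_map, hw]
      push_cast
      linarith
    · have hinner : ⟪(U ^ m) y + w, (U ^ (m + N)) u⟫_𝕜
          = ⟪y, (U ^ N) u⟫_𝕜 + (‖⟪v, (U ^ (m + N)) u⟫_𝕜‖ : 𝕜) := by
        rw [hcv, inner_add_left, inner_smul_left, RCLike.conj_conj, pow_add,
          LinearIsometry.coe_mul, comp_apply, LinearIsometry.inner_map_map]
      rw [hinner, map_add, RCLike.ofReal_re]
      push_cast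
      linarith

theorem tendsto_inner_pow_of_tendsto_inner_pow_self
    (hv : Tendsto (fun n ↦ ⟪v, (U ^ n) v⟫_𝕜) atTop (𝓝 0)) (u : E) :
    Tendsto (fun n ↦ ⟪v, (U ^ n) u⟫_𝕜) atTop (𝓝 0) := by
  by_contra hu
  obtain ⟨ε, hε, hfreq⟩ : ∃ ε > 0, ∃ᶠ n in atTop, ε ≤ ‖⟪v, (U ^ n) u⟫_𝕜‖ := by
    simpa [NormedAddGroup.tendsto_nhds_zero, Filter.Frequently] using hu
  have hbound (J : ℕ) : J * (J * ε ^ 2) ≤ J * ((‖v‖ ^ 2 + 1) * ‖u‖ ^ 2) := by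
    obtain ⟨y, N, -, hy, hyu⟩ := exists_norm_sq_le_and_le_re_inner_pow U hv hfreq J
    have hyu_norm : J * ε ≤ ‖y‖ * ‖u‖ := by
      simpa only [LinearIsometry.norm_map] using hyu.trans (re_inner_le_norm y ((U ^ N) u))
    calc J * (J * ε ^ 2) = (J * ε) ^ 2 := by ring
      _ ≤ (‖y‖ * ‖u‖) ^ 2 := pow_le_pow_left₀ (by positivity) hyu_norm 2
      _ = ‖y‖ ^ 2 * ‖u‖ ^ 2 := mul_pow ..
      _ ≤ J * (‖v‖ ^ 2 + 1) * ‖u‖ ^ 2 := by gcongr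
      _ = J * ((‖v‖ ^ 2 + 1) * ‖u‖ ^ 2) := mul_assoc ..
  obtain ⟨J, hJ⟩ := exists_nat_gt ((‖v‖ ^ 2 + 1) * ‖u‖ ^ 2 / ε ^ 2)
  have hJpos : (0 : ℝ) < J := lt_of_le_of_lt (by positivity) hJ
  exact (le_of_mul_le_mul_left (hbound J) hJpos).not_gt ((div_lt_iff₀ (by positivity)).1 hJ)

theorem tendsto_inner_pow_of_tendsto_inner_pow_self_of_fixed {e : E} (he : ‖e‖ = 1)
    (hUe : U e = e)
    (hv : Tendsto (fun n ↦ ⟪v, (U ^ n) v⟫_𝕜) atTop (𝓝 (⟪v, e⟫_𝕜 * ⟪e, v⟫_𝕜))) (u : E) :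
    Tendsto (fun n ↦ ⟪v, (U ^ n) u⟫_𝕜) atTop (𝓝 (⟪v, e⟫_𝕜 * ⟪e, u⟫_𝕜)) := by
  have hpow (n : ℕ) : (U ^ n) e = e := by
    rw [LinearIsometry.coe_pow, iterate_fixed hUe]
  let v₀ := v - ⟪e, v⟫_𝕜 • e
  have hinner (w : E) (n : ℕ) : ⟪v₀, (U ^ n) w⟫_𝕜 = ⟪v, (U ^ n) w⟫_𝕜 - ⟪v, e⟫_𝕜 * ⟪e, w⟫_𝕜 := by
    have hew : ⟪e, (U ^ n) w⟫_𝕜 = ⟪e, w⟫_𝕜 := by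
      nth_rw 1 [← hpow n]
      exact (U ^ n).inner_map_map e w
    rw [inner_sub_left, inner_smul_left, inner_conj_symm, hew]
  have hv₀e : ⟪v₀, e⟫_𝕜 = 0 := by
    simp [v₀, inner_sub_left, inner_smul_left, inner_self_eq_norm_sq_to_K, he]
  have hv₀ : Tendsto (fun n ↦ ⟪v₀, (U ^ n) v₀⟫_𝕜) atTop (𝓝 0) := by
    have hself (n : ℕ) : ⟪v₀, (U ^ n) v₀⟫_𝕜 = ⟪v₀, (U ^ n) v⟫_𝕜 := by
      rw [map_sub, map_smul, hpow, inner_sub_right, inner_smul_right, hv₀e, mul_zero, sub_zero]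
    simpa only [hself, hinner, sub_self] using hv.sub_const (⟪v, e⟫_𝕜 * ⟪e, v⟫_𝕜)
  have hlim := tendsto_inner_pow_of_tendsto_inner_pow_self U hv₀ u
  simpa only [hinner, sub_add_cancel, zero_add] using hlim.add_const (⟪v, e⟫_𝕜 * ⟪e, u⟫_𝕜)

end LinearIsometry

section L2

variable {α : Type*} [MeasurableSpace α] {m : Measure α}

theorem indicatorConstLp_eq_smul_indicatorConstLp_one {𝕜 : Type*} [NormedField 𝕜] {r : ENNReal}
    {s : Set α} (hs : MeasurableSet s) (hms : m s ≠ ⊤) (c : 𝕜) :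
    indicatorConstLp r hs hms c = c • indicatorConstLp r hs hms (1 : 𝕜) := by
  simp only [indicatorConstLp, ← MemLp.toLp_const_smul]
  congr 1
  ext x
  by_cases hx : x ∈ s <;> simp [hx]

theorem inner_const_one [IsFiniteMeasure m] (f : Lp ℝ 2 m) :
    ⟪Lp.const 2 m (1 : ℝ), f⟫_ℝ = ∫ x, f x ∂m := by
  rw [← indicatorConstLp_univ, L2.inner_indicatorConstLp_one, setIntegral_univ]

end L2

section Koopman

variable {X Y Z : Type*} [MeasurableSpace X] [MeasurableSpace Y] [MeasurableSpace Z]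
  {μ : Measure X} {ν : Measure Y} {η : Measure Z}

/-- The Koopman operator `f ↦ f ∘ p` of a measure-preserving map `p`, as a linear isometry between
real `L²` spaces. For a factor map `p` it embeds `L²` of the factor into `L²` of the extension. -/
noncomputable abbrev koopman (p : X → Y) (hp : MeasurePreserving p μ ν) :
    Lp ℝ 2 ν →ₗᵢ[ℝ] Lp ℝ 2 μ :=
  Lp.compMeasurePreservingₗᵢ ℝ p hp

theorem koopman_coeFn (p : X → Y) (hp : MeasurePreserving p μ ν) (f : Lp ℝ 2 ν) :
    koopman p hp f =ᵐ[μ] f ∘ p :=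
  Lp.coeFn_compMeasurePreserving f hp

theorem integral_koopman (p : X → Y) (hp : MeasurePreserving p μ ν) (f : Lp ℝ 2 ν) :
    ∫ x, koopman p hp f x ∂μ = ∫ y, f y ∂ν := by
  rw [integral_congr_ae (koopman_coeFn p hp f)]
  have hmap := integral_map (f := f) hp.aemeasurable
    (hp.map_eq.symm ▸ Lp.aestronglyMeasurable f)
  rwa [hp.map_eq, eq_comm] at hmap

theorem koopman_pow (T : X → X) (hT : MeasurePreserving T μ μ) (n : ℕ) :
    koopman T hT ^ n = koopman T^[n] (hT.iterate n) := by
  ext1 f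
  rw [LinearIsometry.coe_pow]
  exact congr_fun (Lp.compMeasurePreserving_iterate hT n) f

theorem koopman_pow_coeFn (T : X → X) (hT : MeasurePreserving T μ μ) (n : ℕ) (f : Lp ℝ 2 μ) :
    (koopman T hT ^ n) f =ᵐ[μ] f ∘ T^[n] := by
  rw [koopman_pow]
  exact koopman_coeFn _ _ f

theorem koopman_pow_koopman_of_semiconj {p : Z → X} (hp : MeasurePreserving p η μ) {W : Z → Z}
    (hW : MeasurePreserving W η η) {T : X → X} (hT : MeasurePreserving T μ μ)
    (hpT : Semiconj p W T) (n : ℕ) (f : Lp ℝ 2 μ) :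
    (koopman W hW ^ n) (koopman p hp f) = koopman p hp ((koopman T hT ^ n) f) := by
  have hcomm : Semiconj (koopman p hp) (koopman T hT) (koopman W hW) := fun f ↦ by
    refine (Lp.compMeasurePreserving_comp_apply f hT hp).symm.trans ?_
    simp only [← hpT.comp_eq]
    exact Lp.compMeasurePreserving_comp_apply f hp hW
  simpa only [LinearIsometry.coe_pow] using (hcomm.iterate_right n f).symm

section Mixing

variable {W : Z → Z} (hW : MeasurePreserving W η η)

theorem tendsto_inner_indicator_koopman_pow [IsProbabilityMeasure η] {C : Set Z}
    (hC : MeasurableSet C)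
    (hCmix : Tendsto (fun n ↦ η.real (C ∩ W^[n] ⁻¹' C)) atTop (𝓝 (η.real C * η.real C)))
    (F : Lp ℝ 2 η) :
    Tendsto (fun n ↦ ⟪indicatorConstLp 2 hC (measure_ne_top η C) (1 : ℝ),
      (koopman W hW ^ n) F⟫_ℝ) atTop (𝓝 (η.real C * ∫ z, F z ∂η)) := by
  let v : Lp ℝ 2 η := indicatorConstLp 2 hC (measure_ne_top η C) 1
  have hnorm : ‖Lp.const 2 η (1 : ℝ)‖ = 1 := by simp [Lp.norm_const]
  have hconst : ⟪Lp.const 2 η (1 : ℝ), v⟫_ℝ = η.real C := by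
    rw [inner_const_one, integral_indicatorConstLp, smul_eq_mul, mul_one]
  have hv (n : ℕ) : ⟪v, (koopman W hW ^ n) v⟫_ℝ = η.real (C ∩ W^[n] ⁻¹' C) := by
    rw [koopman_pow]
    exact L2.real_inner_indicatorConstLp_one_indicatorConstLp_one hC ((hW.iterate n).measurable hC)
  have hlim := tendsto_inner_pow_of_tendsto_inner_pow_self_of_fixed (koopman W hW) hnorm rfl
    (v := v) (by simpa only [hv, real_inner_comm _ v, hconst] using hCmix) F
  rwa [real_inner_comm, hconst, inner_const_one] at hlim

theorem tendsto_measureReal_inter_preimage_of_mixing_factor [IsFiniteMeasure ν] {q : Z → Y}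
    (hq : MeasurePreserving q η ν) {S : Y → Y} (hqS : Semiconj q W S) (hS : Measurable S)
    (hSmix : MeasureMixing S ν) {A B : Set Y} (hA : MeasurableSet A) (hB : MeasurableSet B) :
    Tendsto (fun n ↦ η.real (q ⁻¹' A ∩ W^[n] ⁻¹' (q ⁻¹' B))) atTop
      (𝓝 (η.real (q ⁻¹' A) * η.real (q ⁻¹' B))) := by
  have hreal {D : Set Y} (hD : MeasurableSet D) : η.real (q ⁻¹' D) = ν.real D :=
    hq.measureReal_preimage hD.nullMeasurableSet
  have hinter (n : ℕ) : η.real (q ⁻¹' A ∩ W^[n] ⁻¹' (q ⁻¹' B)) = ν.real (A ∩ S^[n] ⁻¹' B) := by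
    rw [← hreal (hA.inter ((hS.iterate n) hB)), Set.preimage_inter, ← Set.preimage_comp,
      ← Set.preimage_comp, (hqS.iterate_right n).comp_eq]
  simp only [hinter, hreal hA, hreal hB, measureReal_def, ← ENNReal.toReal_mul]
  exact (ENNReal.tendsto_toReal (by finiteness)).comp (hSmix A B hA hB)

theorem tendsto_inner_koopman_pow_of_mixing_factor [IsProbabilityMeasure ν] {q : Z → Y}
    (hq : MeasurePreserving q η ν) {S : Y → Y} (hqS : Semiconj q W S) (hS : Measurable S)
    (hSmix : MeasureMixing S ν) (g : Lp ℝ 2 ν) (F : Lp ℝ 2 η) :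
    Tendsto (fun n ↦ ⟪koopman q hq g, (koopman W hW ^ n) F⟫_ℝ) atTop
      (𝓝 ((∫ y, g y ∂ν) * ∫ z, F z ∂η)) := by
  have : IsProbabilityMeasure η := (Measure.isProbabilityMeasure_map_iff hq.aemeasurable).1
    (hq.map_eq.symm ▸ ‹IsProbabilityMeasure ν›)
  rw [← inner_const_one g]
  induction g using Lp.induction (p := 2) ENNReal.ofNat_ne_top with
  | @indicatorConst c B hB hνB =>
    let v : Lp ℝ 2 ν := indicatorConstLp 2 hB hνB.ne 1
    have hint : ⟪Lp.const 2 ν (1 : ℝ), v⟫_ℝ = ν.real B := by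
      rw [inner_const_one, integral_indicatorConstLp, smul_eq_mul, mul_one]
    have hlim : Tendsto (fun n ↦ ⟪koopman q hq v, (koopman W hW ^ n) F⟫_ℝ) atTop
        (𝓝 (ν.real B * ∫ z, F z ∂η)) := by
      rw [← hq.measureReal_preimage hB.nullMeasurableSet]
      exact tendsto_inner_indicator_koopman_pow hW (hq.measurable hB)
        (tendsto_measureReal_inter_preimage_of_mixing_factor hq hqS hS hSmix hB hB) F
    have hsmul : (Lp.simpleFunc.indicatorConst 2 hB hνB.ne c : Lp ℝ 2 ν) = c • v := by
      rw [Lp.simpleFunc.coe_indicatorConst]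
      exact indicatorConstLp_eq_smul_indicatorConstLp_one hB hνB.ne c
    simpa only [hsmul, map_smul, real_inner_smul_left, real_inner_smul_right, hint,
      mul_assoc] using hlim.const_mul c
  | add hf hg _ hf_lim hg_lim =>
    simpa only [map_add, inner_add_left, inner_add_right, add_mul] using hf_lim.add hg_lim
  | isClosed =>
    have hlip (n : ℕ) : LipschitzWith ‖F‖₊
        fun g : Lp ℝ 2 ν ↦ ⟪koopman q hq g, (koopman W hW ^ n) F⟫_ℝ := by
      refine LipschitzWith.of_dist_le_mul fun g g' ↦ ?_
      rw [dist_eq_norm, ← inner_sub_left, ← map_sub, mul_comm, dist_eq_norm]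
      refine (norm_inner_le_norm _ _).trans_eq ?_
      rw [LinearIsometry.norm_map, LinearIsometry.norm_map, coe_nnnorm]
    exact (LipschitzWith.uniformEquicontinuous _ _ hlip).equicontinuous.isClosed_setOfPred_tendsto
      (by fun_prop)

end Mixing

theorem joining_integral_image_of_weakLimit_general {ι : Type*} {l : Filter ι} [l.NeBot]
    [IsProbabilityMeasure ν] {T : X → X} (hT : Measurable T) {S : Y → Y} (hS : Measurable S)
    (hSmix : MeasureMixing S ν) {W : Z → Z} (hW : MeasurePreserving W η η)
    {p : Z → X} (hp : MeasurePreserving p η μ) (hpT : Semiconj p W T)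
    {q : Z → Y} (hq : MeasurePreserving q η ν) (hqS : Semiconj q W S)
    {k : ι → ℕ} (hk : Tendsto k l atTop) {f f' : Lp ℝ 2 μ}
    (hf : ∀ u : Lp ℝ 2 μ, Tendsto (fun j ↦ ∫ x, f (T^[k j] x) * u x ∂μ) l (𝓝 ⟪f', u⟫_ℝ))
    (g : Lp ℝ 2 ν) :
    ∫ z, f' (p z) * g (q z) ∂η = (∫ x, f x ∂μ) * ∫ y, g y ∂ν := by
  have hTμ : MeasurePreserving T μ μ := hp.of_semiconj hW hpT hT
  let J := (koopman p hp).toContinuousLinearMap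
  let u := J.adjoint (koopman q hq g)
  have hcorr (n : ℕ) : ∫ x, f (T^[n] x) * u x ∂μ
      = ⟪koopman q hq g, (koopman W hW ^ n) (koopman p hp f)⟫_ℝ := calc
    ∫ x, f (T^[n] x) * u x ∂μ = ⟪u, (koopman T hTμ ^ n) f⟫_ℝ := by
      rw [L2.inner_def]
      refine integral_congr_ae ?_
      filter_upwards [koopman_pow_coeFn T hTμ n f] with x hx
      simp [hx]
    _ = ⟪koopman q hq g, koopman p hp ((koopman T hTμ ^ n) f)⟫_ℝ := J.adjoint_inner_left _ _
    _ = ⟪koopman q hq g, (koopman W hW ^ n) (koopman p hp f)⟫_ℝ := by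
      rw [koopman_pow_koopman_of_semiconj hp hW hTμ hpT]
  have hmix := (tendsto_inner_koopman_pow_of_mixing_factor hW hq hqS hS hSmix g
    (koopman p hp f)).comp hk
  have hweak := hf u
  simp only [hcorr] at hweak
  calc ∫ z, f' (p z) * g (q z) ∂η = ⟪koopman p hp f', koopman q hq g⟫_ℝ := by
        rw [L2.inner_def]
        refine integral_congr_ae ?_
        filter_upwards [koopman_coeFn p hp f', koopman_coeFn q hq g] with z hpz hqz
        rw [hpz, hqz]
        exact mul_comm _ _
    _ = ⟪f', u⟫_ℝ := (J.adjoint_inner_right _ _).symm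
    _ = (∫ y, g y ∂ν) * ∫ z, koopman p hp f z ∂η := tendsto_nhds_unique hweak hmix
    _ = (∫ x, f x ∂μ) * ∫ y, g y ∂ν := by rw [integral_koopman, mul_comm]

end Koopman

/-- If `U_T^{k_j} → V` weakly on `L²(μ)`, `S` is mixing and `η` is a joining of
`(X, μ, T)` and `(Y, ν, S)`, then `∫ (V f)(x) g(y) dη = (∫ f dμ)(∫ g dν)`. -/
theorem joining_integral_image_of_weakLimit
    {X Y : Type*} [MeasurableSpace X] [MeasurableSpace Y]
    (μ : Measure X) (ν : Measure Y) [IsProbabilityMeasure μ] [IsProbabilityMeasure ν]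
    (T : X ≃ᵐ X) (hT : MeasurePreserving T μ μ)
    (k : ℕ → ℕ) (hk : StrictMono k)
    (V : Lp ℝ 2 μ →L[ℝ] Lp ℝ 2 μ)
    (hV : ∀ f g : Lp ℝ 2 μ,
      Tendsto (fun j => ∫ x, f ((⇑T)^[k j] x) * g x ∂μ) atTop (𝓝 (@inner ℝ _ _ (V f) g)))
    (S : Y ≃ᵐ Y) (hS : MeasurePreserving S ν ν) (hSmix : MeasureMixing (⇑S) ν)
    (η : Measure (X × Y)) [IsProbabilityMeasure η]
    (hηinv : η.map (Prod.map ⇑T ⇑S) = η)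
    (hη1 : η.map Prod.fst = μ) (hη2 : η.map Prod.snd = ν)
    (f : Lp ℝ 2 μ) (g : Lp ℝ 2 ν) :
    ∫ p, (V f : X → ℝ) p.1 * g p.2 ∂η = (∫ x, f x ∂μ) * ∫ y, g y ∂ν :=
  joining_integral_image_of_weakLimit_general T.measurable S.measurable hSmix
    ⟨T.measurable.prodMap S.measurable, hηinv⟩ ⟨measurable_fst, hη1⟩ (fun _ ↦ rfl)
    ⟨measurable_snd, hη2⟩ (fun _ ↦ rfl) hk.tendsto_atTop (hV f) g
end

section
/- Let R be a measure-preserving map of a probability space (Z, m) and let S be a mixing measure-preserving automorphism of a probability space (Y, ν). Then for every F ∈ L²(m), every g ∈ L²(ν) with ∫_Y g dν = 0, and every H ∈ L²(m ⊗ ν), one has ∫_{Z×Y} F(R^n z) g(S^n y) H(z,y) d(m ⊗ ν)(z,y) → 0 as n → ∞; that is, the functions (z,y) ↦ F(R^n z) g(S^n y) converge weakly to 0 in L²(m ⊗ ν). -/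
open MeasureTheory Filter Topology

/-!
Integrate over `Y` first: put `hₙ z = ∫ g (Sⁿ y) H (z, y) dν`. For almost every `z` the slice
`H (z, ·)` is square integrable, so mixing gives `hₙ z → 0`. Since `|hₙ z| ≤ ‖g‖ ‖H (z, ·)‖` by
Hölder's inequality, dominated convergence yields `hₙ → 0` in `L²(m)`, and pairing with the bounded
sequence `F ∘ Rⁿ` concludes. The same argument works for every pair of finite conjugate exponents.

Mixing of sets passes to functions because the correlations `(f, g) ↦ ∫ f (Sⁿ y) g y dν` are
uniformly bounded bilinear forms, so that it suffices to test them on indicators.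
-/

open scoped ENNReal NNReal

section

variable {α Z Y ι 𝕜 E F G : Type*} [MeasurableSpace α] [MeasurableSpace Z] [MeasurableSpace Y]
  {μ : Measure α} {m : Measure Z} {ν : Measure Y} {p q : ℝ≥0∞} {l : Filter ι}

section Density

variable [NontriviallyNormedField 𝕜] [NormedAddCommGroup E] [NormedSpace 𝕜 E]
  [NormedAddCommGroup F] [NormedSpace 𝕜 F] [NormedAddCommGroup G] [NormedSpace 𝕜 G]
  [Fact (1 ≤ p)]

theorem tendsto_apply_of_tendsto_apply_indicatorConstLp (hp : p ≠ ∞)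
    {L : ι → Lp E p μ →L[𝕜] F} {L₀ : Lp E p μ →L[𝕜] F} {C : ℝ} (hL : ∀ i, ‖L i‖ ≤ C)
    (h : ∀ (s : Set α) (hs : MeasurableSet s) (hμs : μ s ≠ ∞) (c : E),
      Tendsto (fun i => L i (indicatorConstLp p hs hμs c)) l
        (𝓝 (L₀ (indicatorConstLp p hs hμs c))))
    (f : Lp E p μ) : Tendsto (fun i => L i f) l (𝓝 (L₀ f)) := by
  induction f using Lp.induction with
  | hp_ne_top => exact hp
  | @indicatorConst c s hs hμs => exact h s hs hμs.ne c
  | add _ _ _ hf hg => simpa only [map_add] using hf.add hg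
  | isClosed =>
    have hequi : Equicontinuous ((↑) ∘ L : ι → Lp E p μ → F) :=
      (NormedSpace.equicontinuous_TFAE L |>.out 5 1 rfl rfl).mp ⟨C, hL⟩
    exact hequi.isClosed_setOfPred_tendsto L₀.continuous

theorem tendsto_apply₂_of_tendsto_apply₂_indicatorConstLp [Fact (1 ≤ q)] (hp : p ≠ ∞)
    (hq : q ≠ ∞) {L : ι → Lp E p μ →L[𝕜] Lp F q ν →L[𝕜] G} {L₀ : Lp E p μ →L[𝕜] Lp F q ν →L[𝕜] G}
    {C : ℝ} (hL : ∀ i, ‖L i‖ ≤ C)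
    (h : ∀ (s : Set α) (hs : MeasurableSet s) (hμs : μ s ≠ ∞) (a : E)
      (t : Set Y) (ht : MeasurableSet t) (hνt : ν t ≠ ∞) (b : F),
      Tendsto (fun i => L i (indicatorConstLp p hs hμs a) (indicatorConstLp q ht hνt b)) l
        (𝓝 (L₀ (indicatorConstLp p hs hμs a) (indicatorConstLp q ht hνt b))))
    (f : Lp E p μ) (g : Lp F q ν) : Tendsto (fun i => L i f g) l (𝓝 (L₀ f g)) := by
  refine tendsto_apply_of_tendsto_apply_indicatorConstLp hq
    (fun i => (L i).le_of_opNorm_le (hL i) f) (fun t ht hνt b => ?_) g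
  have hflip (i : ι) : ‖(L i).flip (indicatorConstLp q ht hνt b)‖ ≤
      C * ‖indicatorConstLp q ht hνt b‖ :=
    (L i).flip.le_of_opNorm_le ((L i).opNorm_flip.trans_le (hL i)) _
  exact tendsto_apply_of_tendsto_apply_indicatorConstLp hp hflip
    (L₀ := L₀.flip (indicatorConstLp q ht hνt b)) (fun s hs hμs a => h s hs hμs a t ht hνt b) f

end Density

variable [RCLike 𝕜]

section Pairing

variable [NormedAddCommGroup E] [NormedSpace 𝕜 E] [NormedAddCommGroup F] [NormedSpace 𝕜 F]
  [NormedAddCommGroup G] [NormedSpace 𝕜 G] [NormedSpace ℝ G] [SMulCommClass ℝ 𝕜 G]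
  [CompleteSpace G] [Fact (1 ≤ p)] [Fact (1 ≤ q)] [p.HolderConjugate q]
  (B : E →L[𝕜] F →L[𝕜] G)

theorem lpPairing_indicatorConstLp_indicatorConstLp {s t : Set α} (hs : MeasurableSet s)
    (ht : MeasurableSet t) (hμs : μ s ≠ ∞) (hμt : μ t ≠ ∞) (a : E) (b : F) :
    B.lpPairing μ p q (indicatorConstLp p hs hμs a) (indicatorConstLp q ht hμt b) =
      μ.real (s ∩ t) • B a b := by
  rw [ContinuousLinearMap.lpPairing_eq_integral, ← integral_indicator_const _ (hs.inter ht)]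
  refine integral_congr_ae ?_
  filter_upwards [indicatorConstLp_coeFn (p := p) (hs := hs) (hμs := hμs) (c := a),
    indicatorConstLp_coeFn (p := q) (hs := ht) (hμs := hμt) (c := b)] with x hxs hxt
  rw [hxs, hxt]
  by_cases x ∈ s <;> by_cases x ∈ t <;> simp [*]

theorem lpPairing_const_left [IsFiniteMeasure μ] (a : E) (g : Lp F q μ) :
    B.lpPairing μ p q (Lp.const p μ a) g = ∫ x, B a (g x) ∂μ := by
  rw [ContinuousLinearMap.lpPairing_eq_integral]
  refine integral_congr_ae ?_
  filter_upwards [Lp.coeFn_const p μ a] with x hx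
  rw [hx, Function.const_apply]

theorem lpPairing_const_right [IsFiniteMeasure μ] (f : Lp E p μ) (b : F) :
    B.lpPairing μ p q f (Lp.const q μ b) = ∫ x, B (f x) b ∂μ := by
  rw [ContinuousLinearMap.lpPairing_eq_integral]
  refine integral_congr_ae ?_
  filter_upwards [Lp.coeFn_const q μ b] with x hx
  rw [hx, Function.const_apply]

end Pairing

namespace MeasureMixing

variable [IsFiniteMeasure ν] {S : Y → Y}

section Lp

variable [Fact (1 ≤ p)] [Fact (1 ≤ q)] [p.HolderConjugate q]

theorem tendsto_lpPairing_indicatorConstLp (hmix : MeasureMixing S ν)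
    (hS : MeasurePreserving S ν ν) {A B : Set Y} (hA : MeasurableSet A) (hB : MeasurableSet B)
    (hνA : ν A ≠ ∞) (hνB : ν B ≠ ∞) (a b : 𝕜) :
    Tendsto (fun n => (ContinuousLinearMap.mul 𝕜 𝕜).lpPairing ν p q
        (Lp.compMeasurePreservingₗᵢ 𝕜 S^[n] (hS.iterate n) (indicatorConstLp p hA hνA a))
        (indicatorConstLp q hB hνB b)) atTop
      (𝓝 ((∫ y, indicatorConstLp p hA hνA a y ∂ν) * ∫ y, indicatorConstLp q hB hνB b y ∂ν)) := by
  have hreal : Tendsto (fun n => ν.real (S^[n] ⁻¹' A ∩ B)) atTop (𝓝 (ν.real A * ν.real B)) := by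
    have := (ENNReal.tendsto_toReal (by finiteness)).comp (hmix B A hB hA)
    simpa only [Measure.real, Function.comp_def, Set.inter_comm, mul_comm, ENNReal.toReal_mul]
      using this
  have hcorr (n : ℕ) : (ContinuousLinearMap.mul 𝕜 𝕜).lpPairing ν p q
      (Lp.compMeasurePreservingₗᵢ 𝕜 S^[n] (hS.iterate n) (indicatorConstLp p hA hνA a))
      (indicatorConstLp q hB hνB b) = ν.real (S^[n] ⁻¹' A ∩ B) • (a * b) :=
    lpPairing_indicatorConstLp_indicatorConstLp _ (hA.preimage (hS.iterate n).measurable) hB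
      (by finiteness) hνB a b
  simpa only [hcorr, integral_indicatorConstLp, smul_mul_smul_comm] using hreal.smul_const (a * b)

theorem tendsto_lpPairing (hmix : MeasureMixing S ν) (hS : MeasurePreserving S ν ν)
    (hp : p ≠ ∞) (hq : q ≠ ∞) (f : Lp 𝕜 p ν) (g : Lp 𝕜 q ν) :
    Tendsto (fun n => (ContinuousLinearMap.mul 𝕜 𝕜).lpPairing ν p q
        (Lp.compMeasurePreservingₗᵢ 𝕜 S^[n] (hS.iterate n) f) g) atTop
      (𝓝 ((∫ y, f y ∂ν) * ∫ y, g y ∂ν)) := by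
  let M := ContinuousLinearMap.mul 𝕜 𝕜
  let U (n : ℕ) : Lp 𝕜 p ν →L[𝕜] Lp 𝕜 p ν :=
    (Lp.compMeasurePreservingₗᵢ 𝕜 S^[n] (hS.iterate n)).toContinuousLinearMap
  let Φ : Lp 𝕜 p ν →L[𝕜] Lp 𝕜 q ν →L[𝕜] 𝕜 :=
    M.bilinearComp ((M.lpPairing ν p q).flip (Lp.const q ν 1)) (M.lpPairing ν p q (Lp.const p ν 1))
  have hΦ (f : Lp 𝕜 p ν) (g : Lp 𝕜 q ν) : Φ f g = (∫ y, f y ∂ν) * ∫ y, g y ∂ν := by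
    simp [Φ, M, lpPairing_const_left, lpPairing_const_right]
  have hnorm (n : ℕ) : ‖M.lpPairing ν p q ∘L U n‖ ≤ ‖M.lpPairing ν p q‖ :=
    (ContinuousLinearMap.opNorm_comp_le _ _).trans <|
      mul_le_of_le_one_right (norm_nonneg _) (LinearIsometry.norm_toContinuousLinearMap_le _)
  rw [← hΦ]
  refine tendsto_apply₂_of_tendsto_apply₂_indicatorConstLp hp hq hnorm
    (fun A hA hνA a B hB hνB b => ?_) f g
  rw [hΦ]
  exact hmix.tendsto_lpPairing_indicatorConstLp hS hA hB hνA hνB a b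

end Lp

theorem tendsto_integral_comp_iterate_mul [p.HolderConjugate q] (hmix : MeasureMixing S ν)
    (hS : MeasurePreserving S ν ν) (hp : p ≠ ∞) (hq : q ≠ ∞) {f g : Y → 𝕜}
    (hf : MemLp f p ν) (hg : MemLp g q ν) :
    Tendsto (fun n => ∫ y, f (S^[n] y) * g y ∂ν) atTop (𝓝 ((∫ y, f y ∂ν) * ∫ y, g y ∂ν)) := by
  have : Fact (1 ≤ p) := ⟨ENNReal.HolderConjugate.one_le p q⟩
  have : Fact (1 ≤ q) := ⟨ENNReal.HolderConjugate.one_le q p⟩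
  have h := hmix.tendsto_lpPairing hS hp hq (hf.toLp f) (hg.toLp g)
  rw [integral_congr_ae hf.coeFn_toLp, integral_congr_ae hg.coeFn_toLp] at h
  refine h.congr fun n => ?_
  rw [ContinuousLinearMap.lpPairing_eq_integral]
  refine integral_congr_ae ?_
  filter_upwards [(hf.comp_measurePreserving (hS.iterate n)).coeFn_toLp, hg.coeFn_toLp]
    with y hfy hgy
  exact congrArg₂ (· * ·) hfy hgy

end MeasureMixing

section Product

variable [NormedAddCommGroup E]

theorem eLpNorm_rpow_toReal_eq_lintegral (hp₀ : p ≠ 0) (hp : p ≠ ∞) (f : α → E) :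
    eLpNorm f p μ ^ p.toReal = ∫⁻ x, ‖f x‖ₑ ^ p.toReal ∂μ := by
  have := ENNReal.toReal_pos hp₀ hp
  rw [eLpNorm_eq_lintegral_rpow_enorm_toReal hp₀ hp, one_div, ENNReal.rpow_inv_rpow this.ne']

variable [SFinite ν]

theorem lintegral_eLpNorm_prodMk_rpow (hp₀ : p ≠ 0) (hp : p ≠ ∞) {H : Z × Y → E}
    (hH : AEStronglyMeasurable H (m.prod ν)) :
    ∫⁻ z, eLpNorm (fun y => H (z, y)) p ν ^ p.toReal ∂m = eLpNorm H p (m.prod ν) ^ p.toReal := by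
  simp only [eLpNorm_rpow_toReal_eq_lintegral hp₀ hp]
  exact (lintegral_prod _ (hH.enorm.pow_const _)).symm

theorem ae_memLp_prodMk (hp₀ : p ≠ 0) (hp : p ≠ ∞) {H : Z × Y → E}
    (hH : MemLp H p (m.prod ν)) : ∀ᵐ z ∂m, MemLp (fun y => H (z, y)) p ν := by
  have hmeas : AEMeasurable (fun z => ∫⁻ y, ‖H (z, y)‖ₑ ^ p.toReal ∂ν) m :=
    (hH.1.enorm.pow_const _).lintegral_prod_right'
  have hfin : ∫⁻ z, ∫⁻ y, ‖H (z, y)‖ₑ ^ p.toReal ∂ν ∂m ≠ ∞ := by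
    rw [← lintegral_prod _ (hH.1.enorm.pow_const _)]
    exact (lintegral_rpow_enorm_lt_top_of_eLpNorm_lt_top hp₀ hp hH.2).ne
  filter_upwards [ae_lt_top' hmeas hfin, hH.1.prodMk_left] with z hz hHz
  exact ⟨hHz, (eLpNorm_lt_top_iff_lintegral_rpow_enorm_lt_top hp₀ hp).2 hz⟩

theorem memLp_prod_mul (hp : p ≠ ∞) {f : Z → 𝕜} {g : Y → 𝕜} (hf : MemLp f p m)
    (hg : MemLp g p ν) : MemLp (fun x : Z × Y => f x.1 * g x.2) p (m.prod ν) := by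
  have hmeas := hf.1.comp_fst (ν := ν) |>.mul (hg.1.comp_snd (μ := m))
  rcases eq_or_ne p 0 with rfl | hp₀
  · exact memLp_zero_iff_aestronglyMeasurable.2 hmeas
  refine ⟨hmeas, (eLpNorm_lt_top_iff_lintegral_rpow_enorm_lt_top hp₀ hp).2 ?_⟩
  simp only [enorm_mul, ENNReal.mul_rpow_of_nonneg _ _ ENNReal.toReal_nonneg]
  rw [lintegral_prod_mul (hf.1.enorm.pow_const _) (hg.1.enorm.pow_const _)]
  exact ENNReal.mul_lt_top (lintegral_rpow_enorm_lt_top_of_eLpNorm_lt_top hp₀ hp hf.2)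
    (lintegral_rpow_enorm_lt_top_of_eLpNorm_lt_top hp₀ hp hg.2)

end Product

theorem enorm_integral_mul_le_eLpNorm_mul_eLpNorm [p.HolderConjugate q] {f g : α → 𝕜}
    (hf : AEStronglyMeasurable f μ) (hg : AEStronglyMeasurable g μ) :
    ‖∫ x, f x * g x ∂μ‖ₑ ≤ eLpNorm f p μ * eLpNorm g q μ :=
  calc ‖∫ x, f x * g x ∂μ‖ₑ ≤ eLpNorm (f • g) 1 μ := by
        rw [eLpNorm_one_eq_lintegral_enorm]
        exact enorm_integral_le_lintegral_enorm _
    _ ≤ eLpNorm f p μ * eLpNorm g q μ := eLpNorm_smul_le_mul_eLpNorm hg hf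

section WeakConvergence

variable [SFinite ν] [l.IsCountablyGenerated] [p.HolderConjugate q]

theorem tendsto_eLpNorm_integral_mul_prodMk (hq : q ≠ ∞) {g : ι → Y → 𝕜} {C : ℝ≥0}
    (hg : ∀ i, AEStronglyMeasurable (g i) ν) (hgC : ∀ i, eLpNorm (g i) p ν ≤ C)
    (hg₀ : ∀ h : Y → 𝕜, MemLp h q ν → Tendsto (fun i => ∫ y, g i y * h y ∂ν) l (𝓝 0))
    {H : Z × Y → 𝕜} (hH : MemLp H q (m.prod ν)) :
    Tendsto (fun i => eLpNorm (fun z => ∫ y, g i y * H (z, y) ∂ν) q m) l (𝓝 0) := by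
  have hq₀ : q ≠ 0 := ENNReal.HolderConjugate.ne_zero q p
  have hq_pos : 0 < q.toReal := ENNReal.toReal_pos hq₀ hq
  have hslice := ae_memLp_prodMk hq₀ hq hH
  have hmeas (i : ι) : AEMeasurable (fun z => ‖∫ y, g i y * H (z, y) ∂ν‖ₑ ^ q.toReal) m :=
    ((hg i).comp_snd.mul hH.1).integral_prod_right'.enorm.pow_const _
  have hbound (i : ι) : ∀ᵐ z ∂m, ‖∫ y, g i y * H (z, y) ∂ν‖ₑ ^ q.toReal ≤
      (C * eLpNorm (fun y => H (z, y)) q ν) ^ q.toReal := by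
    filter_upwards [hslice] with z hz
    gcongr
    exact (enorm_integral_mul_le_eLpNorm_mul_eLpNorm (hg i) hz.1).trans (by gcongr; exact hgC i)
  have hfin : ∫⁻ z, (C * eLpNorm (fun y => H (z, y)) q ν) ^ q.toReal ∂m ≠ ∞ := by
    simp only [ENNReal.mul_rpow_of_nonneg _ _ hq_pos.le]
    rw [lintegral_const_mul' _ _ (by finiteness), lintegral_eLpNorm_prodMk_rpow hq₀ hq hH.1]
    finiteness [hH.2]
  have hlim : ∀ᵐ z ∂m,
      Tendsto (fun i => ‖∫ y, g i y * H (z, y) ∂ν‖ₑ ^ q.toReal) l (𝓝 0) := by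
    filter_upwards [hslice] with z hz
    simpa [ENNReal.zero_rpow_of_pos hq_pos] using (hg₀ _ hz).enorm.ennrpow_const q.toReal
  have hint := tendsto_lintegral_filter_of_dominated_convergence' _
    (Eventually.of_forall hmeas) (Eventually.of_forall hbound) hfin hlim
  simp only [eLpNorm_eq_lintegral_rpow_enorm_toReal hq₀ hq]
  simpa [hq_pos] using hint.ennrpow_const (1 / q.toReal)

variable [SFinite m]

theorem integral_prod_mul_mul (hp : p ≠ ∞) {f : Z → 𝕜} {g : Y → 𝕜} (hf : MemLp f p m)
    (hg : MemLp g p ν) {H : Z × Y → 𝕜} (hH : MemLp H q (m.prod ν)) :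
    ∫ x, f x.1 * g x.2 * H x ∂(m.prod ν) = ∫ z, f z * ∫ y, g y * H (z, y) ∂ν ∂m := by
  have hint : Integrable (fun x : Z × Y => f x.1 * g x.2 * H x) (m.prod ν) :=
    (memLp_prod_mul hp hf hg).integrable_mul hH
  rw [integral_prod _ hint]
  simp only [mul_assoc, integral_const_mul]

theorem tendsto_integral_prod_mul_mul_zero (hp : p ≠ ∞) (hq : q ≠ ∞) {f : ι → Z → 𝕜}
    {g : ι → Y → 𝕜} {C D : ℝ≥0} (hf : ∀ i, AEStronglyMeasurable (f i) m)
    (hfC : ∀ i, eLpNorm (f i) p m ≤ C)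
    (hg : ∀ i, AEStronglyMeasurable (g i) ν) (hgD : ∀ i, eLpNorm (g i) p ν ≤ D)
    (hg₀ : ∀ h : Y → 𝕜, MemLp h q ν → Tendsto (fun i => ∫ y, g i y * h y ∂ν) l (𝓝 0))
    {H : Z × Y → 𝕜} (hH : MemLp H q (m.prod ν)) :
    Tendsto (fun i => ∫ x, f i x.1 * g i x.2 * H x ∂(m.prod ν)) l (𝓝 0) := by
  have hbound (i : ι) : ‖∫ x, f i x.1 * g i x.2 * H x ∂(m.prod ν)‖ₑ ≤
      C * eLpNorm (fun z => ∫ y, g i y * H (z, y) ∂ν) q m := by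
    have hfi : MemLp (f i) p m := ⟨hf i, (hfC i).trans_lt ENNReal.coe_lt_top⟩
    have hgi : MemLp (g i) p ν := ⟨hg i, (hgD i).trans_lt ENNReal.coe_lt_top⟩
    have hmeas : AEStronglyMeasurable (fun z => ∫ y, g i y * H (z, y) ∂ν) m :=
      ((hg i).comp_snd.mul hH.1).integral_prod_right'
    rw [integral_prod_mul_mul hp hfi hgi hH]
    refine (enorm_integral_mul_le_eLpNorm_mul_eLpNorm (p := p) (q := q) (hf i) hmeas).trans ?_
    gcongr
    exact hfC i
  have hlim := ENNReal.Tendsto.const_mul (a := C)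
    (tendsto_eLpNorm_integral_mul_prodMk hq hg hgD hg₀ hH) (.inr ENNReal.coe_ne_top)
  rw [mul_zero] at hlim
  rw [tendsto_zero_iff_enorm_tendsto_zero]
  exact tendsto_of_tendsto_of_tendsto_of_le_of_le tendsto_const_nhds hlim
    (fun _ => zero_le) hbound

end WeakConvergence

theorem weak_convergence_to_zero_of_mixing_factor_general [SFinite m] [IsFiniteMeasure ν]
    [p.HolderConjugate q] (hp : p ≠ ∞) (hq : q ≠ ∞) {R : Z → Z}
    (hR : MeasurePreserving R m m) {S : Y → Y} (hS : MeasurePreserving S ν ν)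
    (hmix : MeasureMixing S ν) {F : Z → 𝕜} {g : Y → 𝕜} {H : Z × Y → 𝕜} (hF : MemLp F p m)
    (hg : MemLp g p ν) (hg₀ : ∫ y, g y ∂ν = 0) (hH : MemLp H q (m.prod ν)) :
    Tendsto (fun n => ∫ x, F (R^[n] x.1) * g (S^[n] x.2) * H x ∂(m.prod ν)) atTop (𝓝 0) := by
  have hFn (n : ℕ) := hF.comp_measurePreserving (hR.iterate n)
  have hgn (n : ℕ) := hg.comp_measurePreserving (hS.iterate n)
  refine tendsto_integral_prod_mul_mul_zero hp hq (C := (eLpNorm F p m).toNNReal)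
    (D := (eLpNorm g p ν).toNNReal) (fun n => (hFn n).1) (fun n => ?_) (fun n => (hgn n).1)
    (fun n => ?_) (fun h hh => ?_) hH
  · rw [ENNReal.coe_toNNReal hF.2.ne, eLpNorm_comp_measurePreserving hF.1 (hR.iterate n)]
  · rw [ENNReal.coe_toNNReal hg.2.ne, eLpNorm_comp_measurePreserving hg.1 (hS.iterate n)]
  · simpa [hg₀] using hmix.tendsto_integral_comp_iterate_mul hS hp hq hg hh

end

/-- If `R` is measure-preserving on `(Z, m)` and `S` is a mixing automorphism of `(Y, ν)`,
then for `F ∈ L²(m)`, `g ∈ L²(ν)` with `∫ g dν = 0` and `H ∈ L²(m ⊗ ν)`, the functions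
`(z, y) ↦ F(Rⁿ z) g(Sⁿ y)` converge weakly to `0` in `L²(m ⊗ ν)`. -/
theorem weak_convergence_to_zero_of_mixing_factor
    {Z Y : Type*} [MeasurableSpace Z] [MeasurableSpace Y]
    (m : Measure Z) (ν : Measure Y) [IsProbabilityMeasure m] [IsProbabilityMeasure ν]
    (R : Z → Z) (hRm : Measurable R) (hR : MeasurePreserving R m m)
    (S : Y ≃ᵐ Y) (hS : MeasurePreserving S ν ν) (hSmix : MeasureMixing (⇑S) ν)
    (F : Lp ℝ 2 m) (g : Lp ℝ 2 ν) (hg : ∫ y, g y ∂ν = 0)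
    (H : Lp ℝ 2 (m.prod ν)) :
    Tendsto (fun n => ∫ p, F (R^[n] p.1) * g ((⇑S)^[n] p.2) * H p ∂(m.prod ν)) atTop (𝓝 0) := by
  exact weak_convergence_to_zero_of_mixing_factor_general (q := 2) ENNReal.ofNat_ne_top
    ENNReal.ofNat_ne_top hR hS hSmix (Lp.memLp F) (Lp.memLp g) hg (Lp.memLp H)
end

section
/- Let T be a measure-preserving automorphism of a standard Borel probability space (X, μ), and let (k_j) be a strictly increasing sequence of natural numbers such that the Koopman powers U_T^{k_j} converge weakly to a bounded operator V on L²(μ). Then there exists a self-joining λ of (X, μ, T), i.e. a probability measure on X × X invariant under T × T with both marginals equal to μ, such that ∫_{X×X} f(x) g(x') dλ(x,x') = ∫_X (V f)(x) g(x) dμ(x) for all bounded measurable f, g : X → ℝ. (λ is the weak limit of the graph joinings of the powers T^{k_j}.) -/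
open MeasureTheory Filter Topology

/-!
The couplings of two probability measures `μ`, `ν` on Polish spaces form a weakly compact set,
because fixing the marginals forces tightness. So the graph joinings of the maps `S i`, here
`S i = T^[k i]`, accumulate at a coupling `λ`. On the set of couplings weak convergence is stronger
than it looks: by Cauchy-Schwarz, `(f, g) ↦ ∫ f(x) g(y) dπ` is bounded by `‖f‖₂ ‖g‖₂` uniformly in
the coupling `π`, hence convergence for continuous `f`, `g` extends by density to all of `L²`.
Applied to indicators, this shows that `λ` is invariant although `T` is only measurable; applied to
general `f`, `g`, it identifies `∫ f(x) g(y) dλ` with the limit of `⟨f ∘ S i, g⟩`, which is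
`⟨V f, g⟩`.
-/

theorem inner_eq_integral_mul_of_ae_eq {α : Type*} [MeasurableSpace α] {μ : Measure α}
    {F G : Lp ℝ 2 μ} {f g : α → ℝ} (hF : F =ᵐ[μ] f) (hG : G =ᵐ[μ] g) :
    inner ℝ F G = ∫ x, f x * g x ∂μ := by
  rw [L2.inner_def]
  refine integral_congr_ae ?_
  filter_upwards [hF, hG] with x hFx hGx
  rw [hFx, hGx, real_inner_comm]
  rfl

/-- `π` is a coupling of `μ` and `ν`: a measure on the product with these two marginals. -/
structure IsCoupling {X Y : Type*} [MeasurableSpace X] [MeasurableSpace Y]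
    (π : Measure (X × Y)) (μ : Measure X) (ν : Measure Y) : Prop where
  fst : MeasurePreserving Prod.fst π μ
  snd : MeasurePreserving Prod.snd π ν

/-- `π` is a joining of the systems `(X, μ, T)` and `(Y, ν, R)`: a coupling of `μ` and `ν` that is
invariant under `T × R`. A self-joining is the case where the two systems coincide. -/
structure IsJoining {X Y : Type*} [MeasurableSpace X] [MeasurableSpace Y] (π : Measure (X × Y))
    (T : X → X) (R : Y → Y) (μ : Measure X) (ν : Measure Y) : Prop extends IsCoupling π μ ν where
  invariant : MeasurePreserving (Prod.map T R) π π

/-- The measure `ν` transported to the graph of `S : Y → X`. The value of `S` is the first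
coordinate, so that integrating `f(x) g(y)` yields the Koopman pairing of `f ∘ S` with `g`. -/
noncomputable def graphMeasure {X Y : Type*} [MeasurableSpace X] [MeasurableSpace Y]
    (S : Y → X) (ν : Measure Y) : Measure (X × Y) :=
  ν.map fun y => (S y, y)

section Measurable

variable {X Y : Type*} [MeasurableSpace X] [MeasurableSpace Y]
  {μ : Measure X} {ν : Measure Y} {π : Measure (X × Y)}

namespace IsCoupling

theorem isProbabilityMeasure [IsProbabilityMeasure μ] (h : IsCoupling π μ ν) :
    IsProbabilityMeasure π :=
  (Measure.isProbabilityMeasure_map_iff h.fst.aemeasurable).1 (h.fst.map_eq.symm ▸ inferInstance)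

/-- The bilinear form `(f, g) ↦ ∫ f(x) g(y) dπ` of a coupling `π`, on `L²(μ) × L²(ν)`. It is
encoded as the inner product in `L²(π)` of the pullbacks along the two projections. -/
noncomputable def pairing (h : IsCoupling π μ ν) : Lp ℝ 2 μ →L[ℝ] Lp ℝ 2 ν →L[ℝ] ℝ :=
  (innerSL ℝ).bilinearComp
    (Lp.compMeasurePreservingₗᵢ ℝ Prod.fst h.fst).toContinuousLinearMap
    (Lp.compMeasurePreservingₗᵢ ℝ Prod.snd h.snd).toContinuousLinearMap

theorem pairing_eq_integral_of_ae_eq (h : IsCoupling π μ ν) {F : Lp ℝ 2 μ} {G : Lp ℝ 2 ν}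
    {f : X → ℝ} {g : Y → ℝ} (hF : F =ᵐ[μ] f) (hG : G =ᵐ[ν] g) :
    h.pairing F G = ∫ p, f p.1 * g p.2 ∂π :=
  inner_eq_integral_mul_of_ae_eq
    ((Lp.coeFn_compMeasurePreserving F h.fst).trans (h.fst.quasiMeasurePreserving.ae_eq_comp hF))
    ((Lp.coeFn_compMeasurePreserving G h.snd).trans (h.snd.quasiMeasurePreserving.ae_eq_comp hG))

theorem norm_pairing_le (h : IsCoupling π μ ν) (F : Lp ℝ 2 μ) (G : Lp ℝ 2 ν) :
    ‖h.pairing F G‖ ≤ ‖F‖ * ‖G‖ :=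
  calc ‖h.pairing F G‖
    _ ≤ ‖Lp.compMeasurePreserving Prod.fst h.fst F‖ * ‖Lp.compMeasurePreserving Prod.snd h.snd G‖ :=
      abs_real_inner_le_norm (Lp.compMeasurePreserving Prod.fst h.fst F) _
    _ = ‖F‖ * ‖G‖ := by rw [Lp.norm_compMeasurePreserving, Lp.norm_compMeasurePreserving]

theorem equicontinuous_pairing {ι : Type*} {π : ι → Measure (X × Y)}
    (h : ∀ i, IsCoupling (π i) μ ν) (F : Lp ℝ 2 μ) : Equicontinuous fun i G => (h i).pairing F G :=
  (LipschitzWith.uniformEquicontinuous _ _ fun i =>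
    AddMonoidHomClass.lipschitz_of_bound ((h i).pairing F) ‖F‖
      ((h i).norm_pairing_le F)).equicontinuous

theorem equicontinuous_pairing_flip {ι : Type*} {π : ι → Measure (X × Y)}
    (h : ∀ i, IsCoupling (π i) μ ν) (G : Lp ℝ 2 ν) : Equicontinuous fun i F => (h i).pairing F G :=
  (LipschitzWith.uniformEquicontinuous _ _ fun i =>
    AddMonoidHomClass.lipschitz_of_bound ((h i).pairing.flip G) ‖G‖ fun F =>
      ((h i).norm_pairing_le F G).trans_eq (mul_comm _ _)).equicontinuous

theorem pairing_indicatorConstLp_one (h : IsCoupling π μ ν) [IsFiniteMeasure μ] [IsFiniteMeasure ν]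
    {A : Set X} {B : Set Y} (hA : MeasurableSet A) (hB : MeasurableSet B) :
    h.pairing (indicatorConstLp 2 hA (measure_ne_top μ A) 1)
      (indicatorConstLp 2 hB (measure_ne_top ν B) 1) = π.real (A ×ˢ B) := by
  rw [h.pairing_eq_integral_of_ae_eq indicatorConstLp_coeFn indicatorConstLp_coeFn,
    ← integral_indicator_one (hA.prod hB)]
  exact integral_congr_ae (ae_of_all _ fun _ => Set.indicator_prod_one.symm)

end IsCoupling

theorem measurePreserving_graphMeasure {S : Y → X} (hS : Measurable S) :
    MeasurePreserving (fun y => (S y, y)) ν (graphMeasure S ν) :=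
  (hS.prodMk measurable_id).measurePreserving ν

theorem isCoupling_graphMeasure {S : Y → X} (hS : MeasurePreserving S ν μ) :
    IsCoupling (graphMeasure S ν) μ ν where
  fst := MeasurePreserving.map_of_comp (g := Prod.fst) hS measurable_fst
    (hS.measurable.prodMk measurable_id)
  snd := MeasurePreserving.map_of_comp (g := Prod.snd) (.id ν) measurable_snd
    (hS.measurable.prodMk measurable_id)

theorem isJoining_graphMeasure {S : Y → X} {T : X → X} {R : Y → Y} (hS : MeasurePreserving S ν μ)
    (hT : Measurable T) (hR : MeasurePreserving R ν ν) (hST : Function.Semiconj S R T) :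
    IsJoining (graphMeasure S ν) T R μ ν where
  toIsCoupling := isCoupling_graphMeasure hS
  invariant := (measurePreserving_graphMeasure hS.measurable).of_semiconj hR
    (fun y => Prod.ext (hST y) rfl) (hT.prodMap hR.measurable)

theorem pairing_graphMeasure {S : Y → X} (hS : MeasurePreserving S ν μ) (F : Lp ℝ 2 μ)
    (G : Lp ℝ 2 ν) :
    (isCoupling_graphMeasure hS).pairing F G = ∫ y, F (S y) * G y ∂ν := by
  have hcoupling := isCoupling_graphMeasure hS
  rw [hcoupling.pairing_eq_integral_of_ae_eq .rfl .rfl]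
  exact integral_map (measurePreserving_graphMeasure hS.measurable).aemeasurable
    (((Lp.aestronglyMeasurable F).comp_measurePreserving hcoupling.fst).mul
      ((Lp.aestronglyMeasurable G).comp_measurePreserving hcoupling.snd))

end Measurable

section Metrizable

variable {X Y : Type*}
  [TopologicalSpace X] [TopologicalSpace.MetrizableSpace X] [MeasurableSpace X] [BorelSpace X]
  [TopologicalSpace Y] [TopologicalSpace.MetrizableSpace Y] [SecondCountableTopology Y]
  [MeasurableSpace Y] [BorelSpace Y]

theorem isClosed_setOfPred_isCoupling (μ : Measure X) [IsProbabilityMeasure μ]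
    (ν : Measure Y) [IsProbabilityMeasure ν] :
    IsClosed {π : ProbabilityMeasure (X × Y) | IsCoupling (π : Measure (X × Y)) μ ν} := by
  have hfst : IsClosed {π : ProbabilityMeasure (X × Y) |
      π.map measurable_fst.aemeasurable = (⟨μ, inferInstance⟩ : ProbabilityMeasure X)} :=
    isClosed_eq (ProbabilityMeasure.continuous_map continuous_fst) continuous_const
  have hsnd : IsClosed {π : ProbabilityMeasure (X × Y) |
      π.map measurable_snd.aemeasurable = (⟨ν, inferInstance⟩ : ProbabilityMeasure Y)} :=
    isClosed_eq (ProbabilityMeasure.continuous_map continuous_snd) continuous_const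
  convert! hfst.inter hsnd using 1
  ext π
  exact ⟨fun h => ⟨Subtype.ext h.fst.map_eq, Subtype.ext h.snd.map_eq⟩, fun h =>
    ⟨⟨measurable_fst, congrArg Subtype.val h.1⟩, ⟨measurable_snd, congrArg Subtype.val h.2⟩⟩⟩

variable [SecondCountableTopology X] {μ : Measure X} {ν : Measure Y} {ι : Type*} {l : Filter ι}
  {π : ι → ProbabilityMeasure (X × Y)} {π₀ : ProbabilityMeasure (X × Y)}

theorem IsCoupling.tendsto_pairing [IsFiniteMeasure μ] [IsFiniteMeasure ν]
    (hπ : ∀ i, IsCoupling (π i : Measure (X × Y)) μ ν)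
    (hπ₀ : IsCoupling (π₀ : Measure (X × Y)) μ ν) (hlim : Tendsto π l (𝓝 π₀))
    (F : Lp ℝ 2 μ) (G : Lp ℝ 2 ν) :
    Tendsto (fun i => (hπ i).pairing F G) l (𝓝 (hπ₀.pairing F G)) := by
  have hdenseX := BoundedContinuousFunction.toLp_denseRange (p := 2) ℝ μ ℝ ENNReal.ofNat_ne_top
  have hdenseY := BoundedContinuousFunction.toLp_denseRange (p := 2) ℝ ν ℝ ENNReal.ofNat_ne_top
  refine hdenseX.induction_on
    (p := fun F => Tendsto (fun i => (hπ i).pairing F G) l (𝓝 (hπ₀.pairing F G))) F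
    ((equicontinuous_pairing_flip hπ G).isClosed_setOfPred_tendsto
      (hπ₀.pairing.flip G).continuous) fun f => ?_
  refine hdenseY.induction_on
    (p := fun G => Tendsto (fun i => (hπ i).pairing _ G) l (𝓝 (hπ₀.pairing _ G))) G
    ((equicontinuous_pairing hπ _).isClosed_setOfPred_tendsto
      (hπ₀.pairing _).continuous) fun g => ?_
  have hf := BoundedContinuousFunction.coeFn_toLp (p := 2) (𝕜 := ℝ) μ f
  have hg := BoundedContinuousFunction.coeFn_toLp (p := 2) (𝕜 := ℝ) ν g
  simp only [pairing_eq_integral_of_ae_eq _ hf hg]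
  exact ProbabilityMeasure.tendsto_iff_forall_integral_tendsto.1 hlim
    (f.compContinuous ⟨Prod.fst, continuous_fst⟩ * g.compContinuous ⟨Prod.snd, continuous_snd⟩)

theorem IsCoupling.tendsto_measureReal_prod [IsFiniteMeasure μ] [IsFiniteMeasure ν]
    (hπ : ∀ i, IsCoupling (π i : Measure (X × Y)) μ ν)
    (hπ₀ : IsCoupling (π₀ : Measure (X × Y)) μ ν) (hlim : Tendsto π l (𝓝 π₀))
    {A : Set X} {B : Set Y} (hA : MeasurableSet A) (hB : MeasurableSet B) :
    Tendsto (fun i => (π i : Measure (X × Y)).real (A ×ˢ B)) l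
      (𝓝 ((π₀ : Measure (X × Y)).real (A ×ˢ B))) := by
  simpa only [pairing_indicatorConstLp_one] using IsCoupling.tendsto_pairing hπ hπ₀ hlim
    (indicatorConstLp 2 hA (measure_ne_top μ A) 1) (indicatorConstLp 2 hB (measure_ne_top ν B) 1)

theorem IsJoining.of_tendsto [IsProbabilityMeasure μ] [IsProbabilityMeasure ν] [l.NeBot]
    {T : X → X} {R : Y → Y} (hT : Measurable T) (hR : Measurable R)
    (hπ : ∀ i, IsJoining (π i : Measure (X × Y)) T R μ ν)
    (hlim : Tendsto π l (𝓝 π₀)) : IsJoining (π₀ : Measure (X × Y)) T R μ ν := by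
  have hcoupling : ∀ i, IsCoupling (π i : Measure (X × Y)) μ ν := fun i => (hπ i).toIsCoupling
  have hπ₀ : IsCoupling (π₀ : Measure (X × Y)) μ ν :=
    (isClosed_setOfPred_isCoupling μ ν).mem_of_tendsto hlim (.of_forall hcoupling)
  have hTR : Measurable (Prod.map T R) := hT.prodMap hR
  refine ⟨hπ₀, hTR, Measure.ext_prod fun {A B} hA hB => ?_⟩
  have hAB := IsCoupling.tendsto_measureReal_prod hcoupling hπ₀ hlim hA hB
  have hpreimage := IsCoupling.tendsto_measureReal_prod hcoupling hπ₀ hlim (hT hA) (hR hB)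
  rw [Measure.map_apply hTR (hA.prod hB), ← measureReal_eq_measureReal_iff]
  refine tendsto_nhds_unique hpreimage (hAB.congr fun i => ?_)
  exact ((hπ i).invariant.measureReal_preimage (hA.prod hB).nullMeasurableSet).symm

end Metrizable

section Polish

variable {X Y : Type*} [TopologicalSpace X] [PolishSpace X] [MeasurableSpace X] [BorelSpace X]
  [TopologicalSpace Y] [PolishSpace Y] [MeasurableSpace Y] [BorelSpace Y]

theorem isTightMeasureSet_setOfPred_isCoupling (μ : Measure X) [IsFiniteMeasure μ]
    (ν : Measure Y) [IsFiniteMeasure ν] :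
    IsTightMeasureSet {π : Measure (X × Y) | IsCoupling π μ ν} := by
  refine .prodMk ((isTightMeasureSet_singleton (μ := μ)).subset ?_)
    ((isTightMeasureSet_singleton (μ := ν)).subset ?_)
  · exact Set.image_subset_iff.2 fun π hπ => hπ.fst.map_eq
  · exact Set.image_subset_iff.2 fun π hπ => hπ.snd.map_eq

theorem isCompact_setOfPred_isCoupling (μ : Measure X) [IsProbabilityMeasure μ]
    (ν : Measure Y) [IsProbabilityMeasure ν] :
    IsCompact {π : ProbabilityMeasure (X × Y) | IsCoupling (π : Measure (X × Y)) μ ν} := by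
  rw [← (isClosed_setOfPred_isCoupling μ ν).closure_eq]
  refine isCompact_closure_of_isTightMeasureSet
    ((isTightMeasureSet_setOfPred_isCoupling μ ν).subset ?_)
  rintro _ ⟨π, hπ, rfl⟩
  exact hπ

end Polish

theorem exists_selfJoining_of_weakLimit_general
    {X Y ι : Type*} [MeasurableSpace X] [StandardBorelSpace X]
    [MeasurableSpace Y] [StandardBorelSpace Y]
    (μ : Measure X) [IsProbabilityMeasure μ] (ν : Measure Y) [IsProbabilityMeasure ν]
    (T : X → X) (hT : Measurable T) (R : Y → Y) (hR : MeasurePreserving R ν ν)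
    (l : Filter ι) [l.NeBot] (S : ι → Y → X) (hS : ∀ i, MeasurePreserving (S i) ν μ)
    (hST : ∀ i, Function.Semiconj (S i) R T) (V : Lp ℝ 2 μ → Lp ℝ 2 ν)
    (hV : ∀ (F : Lp ℝ 2 μ) (G : Lp ℝ 2 ν),
      Tendsto (fun i => ∫ y, F (S i y) * G y ∂ν) l (𝓝 (inner ℝ (V F) G))) :
    ∃ lam : Measure (X × Y), IsJoining lam T R μ ν ∧
      ∀ (F : Lp ℝ 2 μ) (f : X → ℝ) (g : Y → ℝ), F =ᵐ[μ] f → MemLp g 2 ν →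
        ∫ p, f p.1 * g p.2 ∂lam = ∫ y, V F y * g y ∂ν := by
  let := upgradeStandardBorel X
  let := upgradeStandardBorel Y
  have hjoin : ∀ i, IsJoining (graphMeasure (S i) ν) T R μ ν := fun i =>
    isJoining_graphMeasure (hS i) hT hR (hST i)
  let graph : ι → ProbabilityMeasure (X × Y) := fun i =>
    ⟨graphMeasure (S i) ν, (hjoin i).isProbabilityMeasure⟩
  have hcoupling : ∀ i, IsCoupling (graph i : Measure (X × Y)) μ ν := fun i =>
    (hjoin i).toIsCoupling
  obtain ⟨lam, hlam, hlim : Tendsto graph (Ultrafilter.of l) (𝓝 lam)⟩ :=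
    (isCompact_setOfPred_isCoupling μ ν).ultrafilter_le_nhds ((Ultrafilter.of l).map graph)
      (tendsto_principal.2 (.of_forall hcoupling))
  have hpairing (F : Lp ℝ 2 μ) (G : Lp ℝ 2 ν) : hlam.pairing F G = inner ℝ (V F) G :=
    tendsto_nhds_unique (IsCoupling.tendsto_pairing hcoupling hlam hlim F G)
      (((hV F G).mono_left (Ultrafilter.of_le l)).congr fun i =>
        (pairing_graphMeasure (hS i) F G).symm)
  refine ⟨lam, .of_tendsto hT hR.measurable hjoin hlim, fun F f g hF hg => ?_⟩
  calc ∫ p, f p.1 * g p.2 ∂(lam : Measure (X × Y))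
    _ = hlam.pairing F (hg.toLp g) := (hlam.pairing_eq_integral_of_ae_eq hF hg.coeFn_toLp).symm
    _ = inner ℝ (V F) (hg.toLp g) := hpairing F _
    _ = ∫ y, V F y * g y ∂ν := inner_eq_integral_mul_of_ae_eq .rfl hg.coeFn_toLp

/-- If the Koopman powers `U_T^{k_j}` of an automorphism `T` of a standard Borel probability
space converge weakly to `V`, then there is a self-joining `λ` of `(X, μ, T)` (the weak limit
of the graph joinings of `T^{k_j}`) whose associated Markov operator is `V`:
`∫ f(x) g(x') dλ = ∫ (V f) g dμ` for bounded measurable `f`, `g`. -/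
theorem exists_selfJoining_of_weakLimit
    {X : Type*} [MeasurableSpace X] [StandardBorelSpace X]
    (μ : Measure X) [IsProbabilityMeasure μ]
    (T : X ≃ᵐ X) (hT : MeasurePreserving T μ μ)
    (k : ℕ → ℕ) (hk : StrictMono k)
    (V : Lp ℝ 2 μ →L[ℝ] Lp ℝ 2 μ)
    (hV : ∀ f g : Lp ℝ 2 μ,
      Tendsto (fun j => ∫ x, f ((⇑T)^[k j] x) * g x ∂μ) atTop (𝓝 (@inner ℝ _ _ (V f) g))) :
    ∃ lam : Measure (X × X), IsProbabilityMeasure lam ∧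
      lam.map (Prod.map ⇑T ⇑T) = lam ∧
      lam.map Prod.fst = μ ∧ lam.map Prod.snd = μ ∧
      ∀ (f g : X → ℝ), Measurable f → (∃ C : ℝ, ∀ x, |f x| ≤ C) →
        Measurable g → (∃ C : ℝ, ∀ x, |g x| ≤ C) →
        ∀ F : Lp ℝ 2 μ, (F : X → ℝ) =ᵐ[μ] f →
          ∫ p, f p.1 * g p.2 ∂lam = ∫ x, (V F : X → ℝ) x * g x ∂μ := by
  obtain ⟨lam, hlam, hint⟩ := exists_selfJoining_of_weakLimit_general μ μ T T.measurable T hT atTop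
    (fun j => T^[k j]) (fun j => hT.iterate (k j))
    (fun j => (Function.Commute.refl T).iterate_left (k j)) V hV
  exact ⟨lam, hlam.isProbabilityMeasure, hlam.invariant.map_eq, hlam.fst.map_eq, hlam.snd.map_eq,
    fun f g _ _ hg ⟨C, hC⟩ F hF =>
      hint F f g hF (.of_bound hg.aestronglyMeasurable C (ae_of_all _ hC))⟩
end

section
/- Let (Y, ν) be a probability space, X a standard Borel space, and κ a Markov kernel from Y to X (so κ(y) is a probability measure on X for each y, measurably in y). Let λ_∞ be the probability measure on X^ℕ × Y defined by ∫ F dλ_∞ = ∫_Y (∫_{X^ℕ} F(x, y) d(⊗_{n∈ℕ} κ(y))(x)) dν(y) for every bounded measurable F : X^ℕ × Y → ℝ, where ⊗_{n∈ℕ} κ(y) is the infinite product of copies of κ(y). Then every bounded measurable F : X^ℕ × Y → ℝ that is symmetric in the X-coordinates — i.e. F(x ∘ σ, y) = F(x, y) for every permutation σ of ℕ moving only finitely many indices — is λ_∞-a.e. equal to a function of y alone: there exists a measurable G : Y → ℝ with F(x, y) = G(y) for λ_∞-a.e. (x, y). -/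
open MeasureTheory Filter Topology ProbabilityTheory

/-!
Given `y`, the `X`-coordinates are i.i.d. with law `κ y`, so the Hewitt–Savage zero-one law makes
`F (·, y)` almost surely constant, and the constant depends measurably on `y` because
`y ↦ (κ y)^ℕ` is a kernel.

For the Hewitt–Savage law, a symmetric event `A` is approximated by a cylinder `B` over a finite
set `s` of indices. A finitely supported permutation moving `s` off itself preserves both the
product measure and `A`, and turns `B` into an independent event which approximates `A` just as
well. In the limit `A` is independent of itself.
-/

open scoped symmDiff

section IndependenceByApproximation

variable {Ω : Type*} [MeasurableSpace Ω] {μ : Measure Ω} [IsProbabilityMeasure μ]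

lemma abs_measureReal_inter_sub_mul_le {A₁ A₂ B₁ B₂ : Set Ω} (hA₁ : MeasurableSet A₁)
    (hA₂ : MeasurableSet A₂) (hB₁ : MeasurableSet B₁) (hB₂ : MeasurableSet B₂)
    (hB : IndepSet B₁ B₂ μ) :
    |μ.real (A₁ ∩ A₂) - μ.real A₁ * μ.real A₂| ≤ 2 * (μ.real (B₁ ∆ A₁) + μ.real (B₂ ∆ A₂)) := by
  have hB_mul : μ.real (B₁ ∩ B₂) = μ.real B₁ * μ.real B₂ := by
    simp only [measureReal_def, hB.measure_inter_eq_mul, ENNReal.toReal_mul]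
  have h_inter : |μ.real (B₁ ∩ B₂) - μ.real (A₁ ∩ A₂)| ≤
      μ.real (B₁ ∆ A₁) + μ.real (B₂ ∆ A₂) := by
    refine (abs_measureReal_sub_le_measureReal_symmDiff (hB₁.inter hB₂).nullMeasurableSet
      (hA₁.inter hA₂).nullMeasurableSet).trans ?_
    refine (measureReal_mono fun x => ?_).trans (measureReal_union_le _ _)
    simp only [Set.mem_symmDiff, Set.mem_inter_iff, Set.mem_union]
    tauto
  have h₁ : |μ.real B₁ - μ.real A₁| ≤ μ.real (B₁ ∆ A₁) :=
    abs_measureReal_sub_le_measureReal_symmDiff hB₁.nullMeasurableSet hA₁.nullMeasurableSet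
  have h₂ : |μ.real B₂ - μ.real A₂| ≤ μ.real (B₂ ∆ A₂) :=
    abs_measureReal_sub_le_measureReal_symmDiff hB₂.nullMeasurableSet hA₂.nullMeasurableSet
  have h_mul : |μ.real B₁ * μ.real B₂ - μ.real A₁ * μ.real A₂| ≤
      μ.real (B₁ ∆ A₁) + μ.real (B₂ ∆ A₂) := by
    calc |μ.real B₁ * μ.real B₂ - μ.real A₁ * μ.real A₂|
        = |(μ.real B₁ - μ.real A₁) * μ.real B₂ + μ.real A₁ * (μ.real B₂ - μ.real A₂)| := by
          ring_nf
      _ ≤ |μ.real B₁ - μ.real A₁| * μ.real B₂ + μ.real A₁ * |μ.real B₂ - μ.real A₂| := by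
          refine (abs_add_le _ _).trans_eq ?_
          rw [abs_mul, abs_mul, abs_of_nonneg measureReal_nonneg, abs_of_nonneg measureReal_nonneg]
      _ ≤ |μ.real B₁ - μ.real A₁| * 1 + 1 * |μ.real B₂ - μ.real A₂| := by
          gcongr <;> exact measureReal_le_one
      _ ≤ μ.real (B₁ ∆ A₁) + μ.real (B₂ ∆ A₂) := by linarith
  rw [abs_le] at h_inter h_mul ⊢
  constructor <;> linarith

lemma indepSet_of_forall_exists_indepSet_symmDiff_lt {A₁ A₂ : Set Ω} (hA₁ : MeasurableSet A₁)
    (hA₂ : MeasurableSet A₂)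
    (h : ∀ ε > 0, ∃ B₁ B₂, MeasurableSet B₁ ∧ MeasurableSet B₂ ∧ IndepSet B₁ B₂ μ ∧
      μ.real (B₁ ∆ A₁) < ε ∧ μ.real (B₂ ∆ A₂) < ε) :
    IndepSet A₁ A₂ μ := by
  have h_zero : |μ.real (A₁ ∩ A₂) - μ.real A₁ * μ.real A₂| ≤ 0 := by
    refine le_of_forall_pos_le_add fun ε hε => ?_
    obtain ⟨B₁, B₂, hB₁, hB₂, hB, hlt₁, hlt₂⟩ := h (ε / 4) (by positivity)
    linarith [abs_measureReal_inter_sub_mul_le hA₁ hA₂ hB₁ hB₂ hB]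
  rw [indepSet_iff_measure_inter_eq_mul hA₁ hA₂ μ, ← ENNReal.toReal_eq_toReal_iff' (by finiteness)
    (by finiteness), ENNReal.toReal_mul]
  exact sub_eq_zero.1 (abs_nonpos_iff.1 h_zero)

end IndependenceByApproximation

section HewittSavage

variable {ι : Type*}

lemma exists_cylinder_measureReal_symmDiff_lt {X : ι → Type*} [∀ i, MeasurableSpace (X i)]
    (μ : Measure (∀ i, X i)) [IsFiniteMeasure μ] {A : Set (∀ i, X i)} (hA : MeasurableSet A)
    {ε : ℝ} (hε : 0 < ε) :
    ∃ (s : Finset ι) (S : Set (∀ i : s, X i)), MeasurableSet S ∧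
      μ.real (cylinder s S ∆ A) < ε := by
  obtain ⟨B, hB, hlt⟩ := exists_measure_symmDiff_lt_of_generateFrom_isSetRing (μ := μ)
    isSetRing_measurableCylinders
    ⟨{Set.univ}, Set.countable_singleton _,
      Set.singleton_subset_iff.2 (univ_mem_measurableCylinders X), by simp⟩
    generateFrom_measurableCylinders.symm hA (ENNReal.ofReal_pos.2 hε)
  obtain ⟨s, S, hS, rfl⟩ := (mem_measurableCylinders B).1 hB
  exact ⟨s, S, hS, ENNReal.toReal_lt_of_lt_ofReal hlt⟩

lemma exists_perm_finite_support_forall_notMem [Infinite ι] (s : Finset ι) :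
    ∃ σ : Equiv.Perm ι, {i | σ i ≠ i}.Finite ∧ ∀ i ∈ s, σ i ∉ s := by
  classical
  obtain ⟨u, hsu, hu⟩ := Infinite.exists_superset_card_eq s (2 * s.card) (by lia)
  have h_card : s.card = (u \ s).card := by rw [Finset.card_sdiff_of_subset hsu]; lia
  let e : s ≃ (u \ s : Finset ι) := Finset.equivOfCardEq h_card
  let f : s ⊕ s ↪ ι :=
    (Function.Embedding.sumMap (.refl _) e.toEmbedding).trans
      (Function.Embedding.sumSet (s := (s : Set ι)) (t := ((u \ s : Finset ι) : Set ι))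
        (Finset.disjoint_coe.2 Finset.disjoint_sdiff))
  refine ⟨Equiv.Perm.viaEmbedding (Equiv.sumComm s s) f, (Set.finite_range f).subset fun i hi => ?_,
    fun i hi => ?_⟩
  · by_contra hif
    exact hi (Equiv.Perm.viaEmbedding_apply_of_notMem _ f i hif)
  · have h_swap : Equiv.Perm.viaEmbedding (Equiv.sumComm s s) f i = e ⟨i, hi⟩ :=
      Equiv.Perm.viaEmbedding_apply (Equiv.sumComm s s) f (Sum.inl ⟨i, hi⟩)
    rw [h_swap]
    exact (Finset.mem_sdiff.1 (e ⟨i, hi⟩).2).2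

variable {X E : Type*}

/-- A function on `X ^ ι` is symmetric when it is invariant under the permutations of the
coordinates that move only finitely many of them. A symmetric event `A` is encoded by its
membership predicate `(· ∈ A)`. -/
def IsSymmetricFunction (f : (ι → X) → E) : Prop :=
  ∀ σ : Equiv.Perm ι, {i | σ i ≠ i}.Finite → ∀ x, f (x ∘ σ) = f x

variable [MeasurableSpace X] (μ : Measure X) [IsProbabilityMeasure μ]

lemma measurePreserving_comp_perm_infinitePi (σ : Equiv.Perm ι) :
    MeasurePreserving (fun x : ι → X => x ∘ σ) (Measure.infinitePi fun _ => μ)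
      (Measure.infinitePi fun _ => μ) :=
  ⟨by fun_prop, Measure.map_infinitePi_infinitePi_of_inj (P := fun _ => μ) σ.injective⟩

lemma indepSet_cylinder_preimage_comp {s t : Finset ι} {σ : ι → ι} (hσ : ∀ i ∈ t, σ i ∉ s)
    {S : Set (s → X)} {T : Set (t → X)} (hS : MeasurableSet S) (hT : MeasurableSet T) :
    IndepSet (cylinder (α := fun _ => X) s S) ((· ∘ σ) ⁻¹' cylinder (α := fun _ => X) t T)
      (Measure.infinitePi fun _ : ι => μ) := by
  classical
  have h_disjoint : Disjoint s (t.image σ) := by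
    simpa only [Finset.disjoint_right, Finset.forall_mem_image] using hσ
  have h_coord : iIndepFun (fun (i : ι) (x : ι → X) => x i) (Measure.infinitePi fun _ => μ) :=
    iIndepFun_infinitePi (P := fun _ => μ) (X := fun _ x => x) fun _ => measurable_id
  have h_restrict := h_coord.indepFun_finset s (t.image σ) h_disjoint measurable_pi_apply
  let reindex (z : t.image σ → X) (i : t) : X := z ⟨σ i, Finset.mem_image_of_mem σ i.2⟩
  have h_reindex : Measurable reindex := by fun_prop
  exact (indepFun_iff_indepSet_preimage (by fun_prop) (by fun_prop)).1
    (h_restrict.comp measurable_id h_reindex) S T hS hT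

theorem hewitt_savage_zero_one [Infinite ι] {A : Set (ι → X)} (hA : MeasurableSet A)
    (hsymm : IsSymmetricFunction (· ∈ A)) :
    Measure.infinitePi (fun _ => μ) A = 0 ∨ Measure.infinitePi (fun _ => μ) A = 1 := by
  refine measure_eq_zero_or_one_of_indepSet_self
    (indepSet_of_forall_exists_indepSet_symmDiff_lt hA hA fun ε hε => ?_)
  obtain ⟨s, S, hS, hlt⟩ :=
    exists_cylinder_measureReal_symmDiff_lt (Measure.infinitePi fun _ : ι => μ) hA hε
  obtain ⟨σ, hσ_fin, hσ⟩ := exists_perm_finite_support_forall_notMem s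
  have hB : MeasurableSet (cylinder (α := fun _ => X) s S) := .cylinder s hS
  have h_pres := measurePreserving_comp_perm_infinitePi μ σ
  have h_symmDiff : ((· ∘ σ) ⁻¹' cylinder (α := fun _ => X) s S) ∆ A =
      (· ∘ σ) ⁻¹' (cylinder (α := fun _ => X) s S ∆ A) := by
    have hA_inv : (· ∘ σ) ⁻¹' A = A := Set.ext fun x => (hsymm σ hσ_fin x).to_iff
    rw [Set.preimage_symmDiff, hA_inv]
  refine ⟨_, _, hB, h_pres.measurable hB, indepSet_cylinder_preimage_comp μ hσ hS hS, hlt, ?_⟩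
  rwa [h_symmDiff, h_pres.measureReal_preimage (hB.symmDiff hA).nullMeasurableSet]

theorem IsSymmetricFunction.exists_ae_eq_const [Infinite ι] [MeasurableSpace E]
    [MeasurableSpace.CountablySeparated E] {f : (ι → X) → E} (hsymm : IsSymmetricFunction f)
    (hf : Measurable f) :
    ∃ c, ∀ᵐ x ∂(Measure.infinitePi fun _ => μ), f x = c := by
  have : Nonempty E := (nonempty_of_isProbabilityMeasure (Measure.infinitePi fun _ : ι => μ)).map f
  refine exists_eventuallyEq_const_of_forall_separating MeasurableSet fun U hU => ?_
  have hU_symm : IsSymmetricFunction (· ∈ f ⁻¹' U) := fun σ hσ x =>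
    congrArg (· ∈ U) (hsymm σ hσ x)
  rcases hewitt_savage_zero_one μ (hf hU) hU_symm with h_zero | h_one
  · exact .inr (measure_eq_zero_iff_ae_notMem.1 h_zero)
  · exact .inl ((mem_ae_iff_prob_eq_one (hf hU)).2 h_one)

end HewittSavage

section InfiniteProductKernel

variable {ι Y : Type*} {X : ι → Type*} [∀ i, MeasurableSpace (X i)] [MeasurableSpace Y]
  (κ : ∀ i, Kernel Y (X i)) [∀ i, IsMarkovKernel (κ i)]

lemma measurable_infinitePi_kernel : Measurable fun y => Measure.infinitePi fun i => κ i y := by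
  refine Measurable.measure_of_isPiSystem_of_isProbabilityMeasure
    generateFrom_squareCylinders.symm
    (isPiSystem_squareCylinders (fun _ => MeasurableSpace.isPiSystem_measurableSet) (by simp)) ?_
  rintro _ ⟨s, A, hA, rfl⟩
  simp_rw [Measure.infinitePi_pi (fun i => κ i _) fun i _ => hA i (Set.mem_univ i)]
  exact Finset.measurable_prod _ fun i _ => (κ i).measurable_coe (hA i (Set.mem_univ i))

/-- The product `y ↦ ⨂ i, κ i y` of an arbitrary family of Markov kernels with the same source. -/
noncomputable def infinitePiKernel : Kernel Y (∀ i, X i) :=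
  ⟨fun y => Measure.infinitePi fun i => κ i y, measurable_infinitePi_kernel κ⟩

lemma infinitePiKernel_apply (y : Y) :
    infinitePiKernel κ y = Measure.infinitePi fun i => κ i y :=
  rfl

instance : IsMarkovKernel (infinitePiKernel κ) :=
  ⟨fun y => by rw [infinitePiKernel_apply]; infer_instance⟩

lemma eq_map_swap_compProd_infinitePiKernel (ν : Measure Y) [SigmaFinite ν]
    {lam : Measure ((∀ i, X i) × Y)}
    (hlam : ∀ (s : Finset ι) (A : ∀ i, Set (X i)), (∀ i ∈ s, MeasurableSet (A i)) →
      ∀ B : Set Y, MeasurableSet B →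
        lam ((s : Set ι).pi A ×ˢ B) = ∫⁻ y in B, ∏ i ∈ s, κ i y (A i) ∂ν) :
    lam = (ν ⊗ₘ infinitePiKernel κ).map Prod.swap := by
  let boxes : Set (Set (∀ i, X i)) := squareCylinders fun _ => {A | MeasurableSet A}
  have h_univ : Set.univ ∈ boxes := ⟨∅, fun _ => Set.univ, by simp, by simp⟩
  refine Measure.ext_of_generateFrom_of_iUnion (Set.image2 (· ×ˢ ·) boxes {B | MeasurableSet B})
    (fun n => Set.univ ×ˢ spanningSets ν n)
    (generateFrom_eq_prod generateFrom_squareCylinders MeasurableSpace.generateFrom_measurableSet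
      ⟨fun _ => Set.univ, fun _ => h_univ, Set.iUnion_const _⟩
      isCountablySpanning_measurableSet).symm
    ((isPiSystem_squareCylinders (fun _ => MeasurableSpace.isPiSystem_measurableSet)
      (by simp)).prod MeasurableSpace.isPiSystem_measurableSet)
    (by rw [← Set.prod_iUnion, iUnion_spanningSets, Set.univ_prod_univ])
    (fun n => ⟨_, h_univ, _, measurableSet_spanningSets ν n, rfl⟩) (fun n => ?_) ?_
  · have h_mass := hlam ∅ (fun _ => Set.univ) (by simp) _ (measurableSet_spanningSets ν n)
    simp only [Finset.coe_empty, Set.empty_pi, Finset.prod_empty, setLIntegral_one] at h_mass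
    exact h_mass.trans_ne (measure_spanningSets_lt_top ν n).ne
  · rintro _ ⟨_, ⟨s, A, hA, rfl⟩, B, hB, rfl⟩
    have hA' : ∀ i ∈ s, MeasurableSet (A i) := fun i _ => hA i (Set.mem_univ i)
    have h_box : MeasurableSet ((s : Set ι).pi A) := .pi s.countable_toSet hA'
    rw [hlam s A hA' B hB, Measure.map_apply measurable_swap (h_box.prod hB),
      Set.preimage_swap_prod, Measure.compProd_apply_prod hB h_box]
    simp_rw [infinitePiKernel_apply, Measure.infinitePi_pi (fun i => κ i _) hA']

end InfiniteProductKernel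

section FiberwiseConstant

variable {Y E : Type*} [MeasurableSpace Y] [MeasurableSpace E]

lemma measurableEq_of_countablySeparated [MeasurableSpace.CountablySeparated E] :
    MeasurableEq E := by
  obtain ⟨code, h_meas, h_inj⟩ :=
    MeasurableSpace.measurable_injection_nat_bool_of_countablySeparated E
  refine ⟨?_⟩
  convert measurableSet_eq_fun (h_meas.comp measurable_fst) (h_meas.comp measurable_snd) using 1
  ext p
  exact h_inj.eq_iff.symm

lemma exists_measurable_forall_ae_eq {Z : Type*} [MeasurableSpace Z] (K : Kernel Y Z)
    [IsSFiniteKernel K] [∀ y, NeZero (K y)] {F : Y × Z → E} (hF : Measurable F)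
    (hconst : ∀ y, ∃ c, ∀ᵐ z ∂(K y), F (y, z) = c) :
    ∃ G : Y → E, Measurable G ∧ ∀ y, ∀ᵐ z ∂(K y), F (y, z) = G y := by
  choose G hG using hconst
  refine ⟨G, fun U hU => ?_, hG⟩
  have h_mem (y : Y) : G y ∈ U ↔ K y (Prod.mk y ⁻¹' (F ⁻¹' U)) ≠ 0 := by
    have h_congr : ∀ᵐ z ∂(K y), (y, z) ∈ F ⁻¹' U ↔ G y ∈ U := by
      filter_upwards [hG y] with z hz
      rw [Set.mem_preimage, hz]
    rw [← frequently_ae_mem_iff]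
    simp only [Set.mem_preimage] at h_congr ⊢
    rw [frequently_congr h_congr, frequently_const]
  have h_preimage : G ⁻¹' U = {y | K y (Prod.mk y ⁻¹' (F ⁻¹' U)) = 0}ᶜ := Set.ext h_mem
  rw [h_preimage]
  exact (Kernel.measurable_kernel_prodMk_left (hF hU) (measurableSet_singleton 0)).compl

end FiberwiseConstant

theorem symmetric_function_ae_eq_function_of_y_general
    {ι X Y E : Type*} [Infinite ι] [MeasurableSpace X] [MeasurableSpace Y] [MeasurableSpace E]
    [MeasurableSpace.CountablySeparated E] (ν : Measure Y) [SigmaFinite ν] (κ : Kernel Y X)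
    [IsMarkovKernel κ] {lam : Measure ((ι → X) × Y)}
    (hlam : ∀ (s : Finset ι) (A : ι → Set X), (∀ i ∈ s, MeasurableSet (A i)) →
      ∀ B : Set Y, MeasurableSet B →
        lam ({x : ι → X | ∀ i ∈ s, x i ∈ A i} ×ˢ B) = ∫⁻ y in B, ∏ i ∈ s, κ y (A i) ∂ν)
    {F : (ι → X) × Y → E} (hFm : Measurable F)
    (hFsymm : ∀ y, IsSymmetricFunction fun x => F (x, y)) :
    ∃ G : Y → E, Measurable G ∧ ∀ᵐ p ∂lam, F p = G p.2 := by
  have : MeasurableEq E := measurableEq_of_countablySeparated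
  have h_const (y : Y) : ∃ c, ∀ᵐ x ∂(infinitePiKernel (fun _ : ι => κ) y), F (x, y) = c :=
    (hFsymm y).exists_ae_eq_const (κ y) (hFm.comp measurable_prodMk_right)
  obtain ⟨G, hG, hFG⟩ := exists_measurable_forall_ae_eq (infinitePiKernel fun _ : ι => κ)
    (hFm.comp measurable_swap) h_const
  refine ⟨G, hG, ?_⟩
  have h_eq : MeasurableSet {p : (ι → X) × Y | F p = G p.2} :=
    measurableSet_eq_fun hFm (hG.comp measurable_snd)
  rw [eq_map_swap_compProd_infinitePiKernel (fun _ => κ) ν hlam,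
    ae_map_iff measurable_swap.aemeasurable h_eq]
  exact Measure.ae_compProd_of_ae_ae (measurable_swap h_eq) (.of_forall hFG)

/-- Relative zero-one law: let `κ` be a Markov kernel from `Y` to a standard Borel space `X`
and let `λ∞` on `X^ℕ × Y` be the relatively independent infinite product
`∫ (⊗_{n ∈ ℕ} κ(y)) ⊗ δ_y dν(y)` (characterized here by its values on cylinder sets). Then
every bounded measurable function on `X^ℕ × Y` that is invariant under finitely supported
permutations of the `X`-coordinates is `λ∞`-a.e. equal to a function of the `Y`-coordinate. -/
theorem symmetric_function_ae_eq_function_of_y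
    {X Y : Type*} [MeasurableSpace X] [StandardBorelSpace X] [MeasurableSpace Y]
    (ν : Measure Y) [IsProbabilityMeasure ν]
    (κ : Kernel Y X) [IsMarkovKernel κ]
    (lam : Measure ((ℕ → X) × Y)) [IsProbabilityMeasure lam]
    (hlam : ∀ (s : Finset ℕ) (A : ℕ → Set X), (∀ i ∈ s, MeasurableSet (A i)) →
      ∀ B : Set Y, MeasurableSet B →
        lam ({x : ℕ → X | ∀ i ∈ s, x i ∈ A i} ×ˢ B) = ∫⁻ y in B, ∏ i ∈ s, κ y (A i) ∂ν)
    (F : (ℕ → X) × Y → ℝ) (hFm : Measurable F) (hFb : ∃ C : ℝ, ∀ p, |F p| ≤ C)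
    (hFsym : ∀ σ : Equiv.Perm ℕ, {i : ℕ | σ i ≠ i}.Finite →
      ∀ (x : ℕ → X) (y : Y), F (x ∘ σ, y) = F (x, y)) :
    ∃ G : Y → ℝ, Measurable G ∧ ∀ᵐ p ∂lam, F p = G p.2 :=
  symmetric_function_ae_eq_function_of_y_general ν κ hlam hFm fun y σ hσ x => hFsym σ hσ x y
end
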